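/- Let S be a Boolean inverse semigroup. Then the equivalence relation ≡ (defined on nonzero idempotents by e ≡ f iff e ≼ f and f ≼ e) is the universal relation on the set of nonzero idempotents of S if and only if S is 0-simplifying. -/

import Mathlib

namespace Paper

/-- An inverse semigroup with zero: an associative multiplication, a zero that is
absorbing, and a map `⁻¹` sending each element to its unique generalized inverse. -/
class IsInverseSemigroup (S : Type*) [Mul S] [Zero S] [Inv S] : Prop where
  mul_assoc : ∀ a b c : S, a * b * c = a * (b * c)
  mul_inv_mul : ∀ a : S, a * a⁻¹ * a = a
  inv_mul_inv : ∀ a : S, a⁻¹ * a * a⁻¹ = a⁻¹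
  inv_unique : ∀ a b : S, a * b * a = a → b * a * b = b → b = a⁻¹
  zero_mul : ∀ a : S, 0 * a = 0
  mul_zero : ∀ a : S, a * 0 = 0

variable {S : Type*} [Mul S] [Zero S] [Inv S]

/-- The natural partial order: `a ≤ b` iff `a = b * a⁻¹ * a`. -/
def nle (a b : S) : Prop := a = b * a⁻¹ * a

/-- `e` is an idempotent. -/
def idem (e : S) : Prop := e * e = e

/-- `a` and `b` are compatible. -/
def compat (a b : S) : Prop := idem (a⁻¹ * b) ∧ idem (a * b⁻¹)

/-- `a` and `b` are orthogonal. -/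
def orth (a b : S) : Prop := a⁻¹ * b = 0 ∧ a * b⁻¹ = 0

/-- `j` is the least upper bound of `a` and `b` for the natural partial order. -/
def isJoin (a b j : S) : Prop :=
  nle a j ∧ nle b j ∧ ∀ c : S, nle a c → nle b c → nle j c

/-- `m` is the greatest lower bound of `a` and `b` for the natural partial order. -/
def isMeet (a b m : S) : Prop :=
  nle m a ∧ nle m b ∧ ∀ c : S, nle c a → nle c b → nle c m

/-- `a` is an atom: a nonzero element with nothing strictly between it and `0`. -/
def isAtomElem (a : S) : Prop := a ≠ 0 ∧ ∀ x : S, nle x a → x = a ∨ x = 0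

/-- `s` is the least upper bound of the finite family `f`. -/
def isJoinFin {m : ℕ} (f : Fin m → S) (s : S) : Prop :=
  (∀ i, nle (f i) s) ∧ ∀ c : S, (∀ i, nle (f i) c) → nle s c

/-- A Boolean inverse semigroup: a nonzero inverse semigroup with zero in which
compatible pairs have joins, multiplication distributes over binary compatible joins,
and the idempotents form a generalized Boolean algebra under the natural partial
order (meets of idempotents are automatically given by multiplication; the extra
requirement is the existence of relative complements). -/
class IsBooleanInverseSemigroup (S : Type*) [Mul S] [Zero S] [Inv S]
    extends IsInverseSemigroup S : Prop where
  exists_ne_zero : ∃ a : S, a ≠ 0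
  compat_join : ∀ a b : S, compat a b → ∃ j, isJoin a b j
  mul_join : ∀ a b j c : S, isJoin a b j → isJoin (c * a) (c * b) (c * j)
  join_mul : ∀ a b j c : S, isJoin a b j → isJoin (a * c) (b * c) (j * c)
  relcomp : ∀ e f : S, idem e → idem f → nle f e →
    ∃ g : S, idem g ∧ nle g e ∧ g * f = 0 ∧ isJoin f g e


/-- An additive ideal: a nonempty two-sided semigroup ideal closed under binary
compatible joins. -/
def isAdditiveIdeal {S : Type*} [Mul S] [Inv S] (I : Set S) : Prop :=
  I.Nonempty ∧ (∀ a ∈ I, ∀ s : S, s * a ∈ I ∧ a * s ∈ I) ∧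
    (∀ a ∈ I, ∀ b ∈ I, compat a b → ∀ j : S, isJoin a b j → j ∈ I)

/-- `f ≼ e`: there is a pencil `x₁, …, xₘ` from `f` to `e`, i.e.
`f = ⋁ᵢ d(xᵢ)` and `r(xᵢ) ≤ e` for all `i`. -/
def pencilLe {S : Type*} [Mul S] [Inv S] (f e : S) : Prop :=
  ∃ (m : ℕ) (x : Fin (m + 1) → S),
    isJoinFin (fun i => (x i)⁻¹ * x i) f ∧ ∀ i, nle (x i * (x i)⁻¹) e

/-- `S` is `0`-simplifying: it is nonzero and its only additive ideals are `{0}`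
and `S`. -/
def isZeroSimplifying (S : Type*) [Mul S] [Zero S] [Inv S] : Prop :=
  (∃ a : S, a ≠ 0) ∧
    ∀ I : Set S, isAdditiveIdeal I → I = {(0 : S)} ∨ I = Set.univ

/-- `S` is fundamental: every element commuting with all idempotents is idempotent. -/
def isFundamental (S : Type*) [Mul S] : Prop :=
  ∀ a : S, (∀ e : S, idem e → a * e = e * a) → idem a

/-- A morphism (additive homomorphism) of Boolean inverse semigroups: a semigroup
homomorphism preserving `0` and binary compatible joins. -/
def isMorphism {S : Type*} {T : Type*} [Mul S] [Zero S] [Inv S]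
    [Mul T] [Zero T] [Inv T] (θ : S → T) : Prop :=
  (∀ a b : S, θ (a * b) = θ a * θ b) ∧ θ 0 = 0 ∧
    ∀ a b j : S, compat a b → isJoin a b j → isJoin (θ a) (θ b) (θ j)

section helpers

open IsInverseSemigroup

variable [IsInverseSemigroup S]

theorem idem_inv {e : S} (h : idem e) : e⁻¹ = e := by
  unfold idem at h
  exact (IsInverseSemigroup.inv_unique e e (by rw [h, h]) (by rw [h, h])).symm

theorem inv_inv_S (a : S) : a⁻¹⁻¹ = a :=
  (IsInverseSemigroup.inv_unique a⁻¹ a (inv_mul_inv a) (mul_inv_mul a)).symm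

theorem idem_mul {e f : S} (he : idem e) (hf : idem f) : idem (e * f) := by
  unfold idem at he hf
  have he' : ∀ z, e * (e * z) = e * z := fun z => by rw [← IsInverseSemigroup.mul_assoc, he]
  have hf' : ∀ z, f * (f * z) = f * z := fun z => by rw [← IsInverseSemigroup.mul_assoc, hf]
  obtain ⟨x, hx⟩ : ∃ x, x = (e * f)⁻¹ := ⟨_, rfl⟩
  have h1 := mul_inv_mul (e * f)
  have h2 := inv_mul_inv (e * f)
  rw [← hx] at h1 h2
  simp only [IsInverseSemigroup.mul_assoc] at h1 h2
  have h2' : ∀ z, x * (e * (f * (x * z))) = x * z := fun z => by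
    conv_rhs => rw [← h2]
    simp only [IsInverseSemigroup.mul_assoc]
  have h3 : f * x * e = x := by
    rw [hx]
    apply IsInverseSemigroup.inv_unique
    · rw [← hx]; simp only [IsInverseSemigroup.mul_assoc, he', hf', h1]
    · rw [← hx]; simp only [IsInverseSemigroup.mul_assoc, he', hf', h2']
  have h4 : idem x := by
    unfold idem
    conv_lhs => rw [← h3]
    simp only [IsInverseSemigroup.mul_assoc, h2']
    rw [← IsInverseSemigroup.mul_assoc, h3]
  have h5 : e * f = x := by
    rw [← inv_inv_S (e * f), ← hx, idem_inv h4]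
  rw [h5]; exact h4

theorem idem_comm {e f : S} (he : idem e) (hf : idem f) : e * f = f * e := by
  have h1 := idem_mul he hf
  have h2 := idem_mul hf he
  have h3 : f * e = (e * f)⁻¹ := by
    unfold idem at *
    have he' : ∀ z, e * (e * z) = e * z := fun z => by rw [← IsInverseSemigroup.mul_assoc, he]
    have hf' : ∀ z, f * (f * z) = f * z := fun z => by rw [← IsInverseSemigroup.mul_assoc, hf]
    simp only [IsInverseSemigroup.mul_assoc] at h1 h2
    apply IsInverseSemigroup.inv_unique
    · simp only [IsInverseSemigroup.mul_assoc, he', hf', h1]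
    · simp only [IsInverseSemigroup.mul_assoc, he', hf', h2]
  rw [h3, idem_inv h1]

theorem idem_d (a : S) : idem (a⁻¹ * a) := by
  unfold idem; rw [← IsInverseSemigroup.mul_assoc, inv_mul_inv]

theorem idem_r (a : S) : idem (a * a⁻¹) := by
  unfold idem; rw [← IsInverseSemigroup.mul_assoc, mul_inv_mul]

theorem mul_d (a : S) : a * (a⁻¹ * a) = a := by rw [← IsInverseSemigroup.mul_assoc, mul_inv_mul]

theorem inv_mul_S (a b : S) : (a * b)⁻¹ = b⁻¹ * a⁻¹ := by
  have hc := idem_comm (idem_r b) (idem_d a)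
  symm
  apply IsInverseSemigroup.inv_unique
  · calc a * b * (b⁻¹ * a⁻¹) * (a * b) = a * ((b * b⁻¹) * (a⁻¹ * a)) * b := by
          simp only [IsInverseSemigroup.mul_assoc]
      _ = (a * a⁻¹ * a) * (b * b⁻¹ * b) := by rw [hc]; simp only [IsInverseSemigroup.mul_assoc]
      _ = a * b := by rw [mul_inv_mul, mul_inv_mul]
  · calc b⁻¹ * a⁻¹ * (a * b) * (b⁻¹ * a⁻¹) = b⁻¹ * ((a⁻¹ * a) * (b * b⁻¹)) * a⁻¹ := by
          simp only [IsInverseSemigroup.mul_assoc]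
      _ = (b⁻¹ * b * b⁻¹) * (a⁻¹ * a * a⁻¹) := by rw [← hc]; simp only [IsInverseSemigroup.mul_assoc]
      _ = b⁻¹ * a⁻¹ := by rw [inv_mul_inv, inv_mul_inv]

theorem nle_iff (a b : S) : nle a b ↔ a = b * (a⁻¹ * a) := by
  unfold nle; rw [IsInverseSemigroup.mul_assoc]

theorem nle_of_mul {a b e : S} (he : idem e) (h : a = b * e) : nle a b := by
  rw [nle_iff]
  have h1 : a * e = a := by rw [h, IsInverseSemigroup.mul_assoc, he]
  have h2 : a⁻¹ * a * e = a⁻¹ * a := by rw [IsInverseSemigroup.mul_assoc, h1]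
  calc a = a * (a⁻¹ * a) := (mul_d a).symm
    _ = b * (e * (a⁻¹ * a)) := by rw [← IsInverseSemigroup.mul_assoc b, ← h]
    _ = b * (a⁻¹ * a) := by rw [idem_comm he (idem_d a), h2]

theorem nle_refl_S (a : S) : nle a a := nle_of_mul (idem_d a) (mul_d a).symm

theorem nle_trans_S {a b c : S} (h1 : nle a b) (h2 : nle b c) : nle a c := by
  rw [nle_iff] at h1 h2
  refine nle_of_mul (idem_mul (idem_d b) (idem_d a)) ?_
  rw [← IsInverseSemigroup.mul_assoc, ← h2, ← h1]

theorem nle_antisymm_S {a b : S} (h1 : nle a b) (h2 : nle b a) : a = b := by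
  rw [nle_iff] at h1 h2
  calc a = b * (a⁻¹ * a) := h1
    _ = a * ((b⁻¹ * b) * (a⁻¹ * a)) := by rw [← IsInverseSemigroup.mul_assoc a, ← h2]
    _ = a * (b⁻¹ * b) := by rw [idem_comm (idem_d b) (idem_d a), ← IsInverseSemigroup.mul_assoc a, mul_d]
    _ = b := h2.symm

theorem nle_r_iff (x e : S) : nle (x * x⁻¹) e ↔ e * x = x := by
  rw [nle_iff, idem_inv (idem_r x), idem_r x]
  constructor
  · intro h
    calc e * x = e * (x * x⁻¹) * x := by rw [IsInverseSemigroup.mul_assoc, mul_inv_mul]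
      _ = x := by rw [← h, mul_inv_mul]
  · intro h
    rw [← IsInverseSemigroup.mul_assoc, h]

theorem isJoin_unique {a b j k : S} (h1 : isJoin a b j) (h2 : isJoin a b k) : j = k :=
  nle_antisymm_S (h1.2.2 k h2.1 h2.2.1) (h2.2.2 j h1.1 h1.2.1)

theorem d_of_nle {a j : S} (h : nle a j) : j⁻¹ * a = a⁻¹ * a := by
  rw [nle_iff] at h
  have h1 : a⁻¹ * a = a⁻¹ * a * (j⁻¹ * j) := by
    rw [idem_comm (idem_d a) (idem_d j)]
    conv_lhs => rw [h, inv_mul_S, idem_inv (idem_d a)]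
    calc a⁻¹ * a * j⁻¹ * (j * (a⁻¹ * a)) = (a⁻¹ * a) * (j⁻¹ * j) * (a⁻¹ * a) := by
          simp only [IsInverseSemigroup.mul_assoc]
      _ = _ := by rw [idem_comm (idem_d a) (idem_d j), IsInverseSemigroup.mul_assoc, idem_d a]
  rw [idem_comm (idem_d a) (idem_d j), IsInverseSemigroup.mul_assoc, ← h] at h1
  exact h1.symm

inductive KK (e : S) : S → Prop
  | base (x : S) (h : e * x = x) : KK e (x⁻¹ * x)
  | join (f g h : S) : KK e f → KK e g → isJoin f g h → KK e h

theorem KK.pencil {e f : S} (h : KK e f) : pencilLe f e := by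
  induction h with
  | base x h =>
    refine ⟨0, fun _ => x, ⟨fun _ => nle_refl_S _, fun c hc => hc 0⟩, fun _ => ?_⟩
    exact (nle_r_iff x e).2 h
  | join f g h _ _ hj ih1 ih2 =>
    obtain ⟨m, x, ⟨hx1, hx2⟩, hx3⟩ := ih1
    obtain ⟨n, y, ⟨hy1, hy2⟩, hy3⟩ := ih2
    refine ⟨m + 1 + n, (Fin.append x y : Fin ((m + 1) + (n + 1)) → S), ⟨?_, ?_⟩, ?_⟩
    · intro i
      refine Fin.addCases (m := m + 1) (n := n + 1) (fun i => ?_) (fun i => ?_) i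
      · simp only [Fin.append_left]; exact nle_trans_S (hx1 i) hj.1
      · simp only [Fin.append_right]; exact nle_trans_S (hy1 i) hj.2.1
    · intro c hc
      refine hj.2.2 c (hx2 c fun i => ?_) (hy2 c fun i => ?_)
      · have := hc (Fin.castAdd (n + 1) i)
        simpa only [Fin.append_left] using this
      · have := hc (Fin.natAdd (m + 1) i)
        simpa only [Fin.append_right] using this
    · intro i
      refine Fin.addCases (m := m + 1) (n := n + 1) (fun i => ?_) (fun i => ?_) i
      · simp only [Fin.append_left]; exact hx3 i
      · simp only [Fin.append_right]; exact hy3 i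

end helpers

section helpers2

open IsInverseSemigroup IsBooleanInverseSemigroup

variable [IsBooleanInverseSemigroup S]

theorem d_join {a b j : S} (h : isJoin a b j) : isJoin (a⁻¹ * a) (b⁻¹ * b) (j⁻¹ * j) := by
  have := mul_join a b j j⁻¹ h
  rwa [d_of_nle h.1, d_of_nle h.2.1] at this

theorem idem_join {a b j : S} (ha : idem a) (hb : idem b) (h : isJoin a b j) : idem j := by
  have h1 := d_join h
  rw [idem_inv ha, idem_inv hb, ha, hb] at h1
  rw [isJoin_unique h h1]
  exact idem_d j

theorem KK.conj {e f : S} (h : KK e f) (s : S) : KK e (s⁻¹ * f * s) := by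
  induction h with
  | base x h =>
    have := KK.base (e := e) (x * s) (by rw [← IsInverseSemigroup.mul_assoc, h])
    rw [inv_mul_S] at this
    simpa only [IsInverseSemigroup.mul_assoc] using this
  | join f g h _ _ hj ih1 ih2 =>
    exact KK.join _ _ _ ih1 ih2 (join_mul _ _ _ s (mul_join _ _ _ s⁻¹ hj))

theorem KK_ideal (e : S) : isAdditiveIdeal {a : S | KK e (a⁻¹ * a)} := by
  have hr : ∀ a : S, KK e (a⁻¹ * a) → ∀ s, KK e ((a * s)⁻¹ * (a * s)) := by
    intro a ha s
    have := ha.conj s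
    rw [inv_mul_S]
    simpa only [IsInverseSemigroup.mul_assoc] using this
  refine ⟨⟨0, ?_⟩, ?_, ?_⟩
  · exact KK.base 0 (IsInverseSemigroup.mul_zero e)
  · intro a ha s
    refine ⟨?_, hr a ha s⟩
    have h1 := hr a ha ((s * a)⁻¹ * (s * a))
    have h2 : (a * ((s * a)⁻¹ * (s * a)))⁻¹ * (a * ((s * a)⁻¹ * (s * a)))
        = (s * a)⁻¹ * (s * a) := by
      rw [inv_mul_S a, idem_inv (idem_d (s * a))]
      have h3 : (s * a)⁻¹ * (s * a) * (a⁻¹ * a) = (s * a)⁻¹ * (s * a) := by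
        simp only [IsInverseSemigroup.mul_assoc, mul_d]
      calc (s * a)⁻¹ * (s * a) * a⁻¹ * (a * ((s * a)⁻¹ * (s * a)))
          = (s * a)⁻¹ * (s * a) * (a⁻¹ * a) * ((s * a)⁻¹ * (s * a)) := by
            simp only [IsInverseSemigroup.mul_assoc]
        _ = _ := by rw [h3]; exact idem_d (s * a)
    rw [h2] at h1
    exact h1
  · intro a ha b hb _ j hj
    exact KK.join _ _ _ ha hb (d_join hj)

theorem fin_join {I : Set S} (hI : isAdditiveIdeal I) (m : ℕ) :
    ∀ g : Fin (m + 1) → S, (∀ i, idem (g i)) → (∀ i, g i ∈ I) →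
      ∃ j ∈ I, idem j ∧ isJoinFin g j := by
  induction m with
  | zero =>
    intro g hg hgI
    refine ⟨g 0, hgI 0, hg 0, fun i => ?_, fun c hc => hc 0⟩
    rw [Fin.fin_one_eq_zero i]; exact nle_refl_S _
  | succ m ih =>
    intro g hg hgI
    obtain ⟨j, hjI, hj, hj1, hj2⟩ := ih (fun i => g i.succ) (fun i => hg _) (fun i => hgI _)
    have hc : compat (g 0) j := by
      constructor
      · rw [idem_inv (hg 0)]; exact idem_mul (hg 0) hj
      · rw [idem_inv hj]; exact idem_mul (hg 0) hj
    obtain ⟨k, hk⟩ := compat_join _ _ hc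
    refine ⟨k, hI.2.2 _ (hgI 0) _ hjI hc k hk, idem_join (hg 0) hj hk, ?_, ?_⟩
    · intro i
      refine Fin.cases ?_ (fun i => ?_) i
      · exact hk.1
      · exact nle_trans_S (hj1 i) hk.2.1
    · intro c hcc
      exact hk.2.2 c (hcc 0) (hj2 c fun i => hcc i.succ)

end helpers2

/-- The relation `≡` (mutual `≼`) is the universal relation on nonzero idempotents
iff `S` is `0`-simplifying. -/
theorem equiv_universal_iff_zeroSimplifying (S : Type*) [Mul S] [Zero S] [Inv S]
    [IsBooleanInverseSemigroup S] :
    (∀ e f : S, idem e → idem f → e ≠ 0 → f ≠ 0 → pencilLe e f ∧ pencilLe f e) ↔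
      isZeroSimplifying S := by
  open IsInverseSemigroup IsBooleanInverseSemigroup in
  constructor
  · intro H
    refine ⟨exists_ne_zero, fun I hI => ?_⟩
    have h0 : (0 : S) ∈ I := by
      obtain ⟨a, ha⟩ := hI.1
      have := (hI.2.1 a ha 0).1
      rwa [IsInverseSemigroup.zero_mul] at this
    by_cases hz : ∃ a ∈ I, a ≠ 0
    · right
      obtain ⟨a, haI, ha⟩ := hz
      have dne : ∀ s : S, s ≠ 0 → s⁻¹ * s ≠ 0 := by
        intro s hs h
        apply hs
        rw [← mul_d s, h, IsInverseSemigroup.mul_zero]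
      rw [Set.eq_univ_iff_forall]
      intro s
      by_cases hs : s = 0
      · rw [hs]; exact h0
      obtain ⟨m, x, hx, hxe⟩ :=
        (H (s⁻¹ * s) (a⁻¹ * a) (idem_d s) (idem_d a) (dne s hs) (dne a ha)).1
      have heI : a⁻¹ * a ∈ I := (hI.2.1 a haI _).1
      have hxI : ∀ i, (x i)⁻¹ * x i ∈ I := by
        intro i
        have h1 := (nle_r_iff _ _).1 (hxe i)
        have h2 := (hI.2.1 _ heI (x i)).2
        rw [h1] at h2
        exact (hI.2.1 _ h2 _).1
      obtain ⟨j, hjI, _, hj⟩ := fin_join hI m _ (fun i => idem_d (x i)) hxI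
      have hjs : j = s⁻¹ * s := nle_antisymm_S (hj.2 _ hx.1) (hx.2 _ hj.1)
      have h3 := (hI.2.1 j hjI s).1
      rwa [hjs, mul_d] at h3
    · left
      push Not at hz
      ext a
      constructor
      · exact fun h => hz a h
      · intro h
        rw [Set.mem_singleton_iff] at h
        rw [h]; exact h0
  · rintro ⟨_, H⟩
    have key : ∀ e f : S, idem e → idem f → e ≠ 0 → pencilLe f e := by
      intro e f he hf hne
      have hmem : e ∈ {a : S | KK e (a⁻¹ * a)} := KK.base e he
      rcases H _ (KK_ideal e) with h | h
      · rw [h] at hmem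
        exact absurd hmem hne
      · have hfm : f ∈ {a : S | KK e (a⁻¹ * a)} := by rw [h]; trivial
        have hfm' : KK e (f⁻¹ * f) := hfm
        rw [idem_inv hf, hf] at hfm'
        exact hfm'.pencil
    exact fun e f he hf hne hnf => ⟨key f e hf he hnf, key e f he hf hne⟩

end Paper
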